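/- Let T be a randomized decision tree on inputs from {0,1}^k. For a node v and coordinate i, let p_{v,i}(z) denote the product, over all nodes w labeled i on the root-to-v path, of the probability that the computation at w follows the edge toward v given x_i = z. Define β_{v,i} bottom-up by: for a leaf v, β_{v,i} = min{p_{v,i}(0), p_{v,i}(1)}; for an internal node v with children v_L, v_R at which coordinate j is queried, β_{v,i} = min{β_{v_L,i}, β_{v_R,i}} if i ≠ j, and β_{v,i} = β_{v_L,i} + β_{v_R,i} if i = j. Then for every i: (1) β_{root,i} = β_i(T), and (2) for every node v, β_{v,i} ≤ min{p_{v,i}(0), p_{v,i}(1)}. -/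

import Mathlib

/-- A randomized decision tree on inputs from `{0,1}^k`: each internal node is
labeled by a coordinate `i ∈ {1,…,k}` and a function `g : {0,1} → [0,1]`; on input
`x`, the computation at such a node moves to the left child with probability
`g (x i)` and to the right child with probability `1 - g (x i)`, independently
across nodes; leaves are labeled by output bits. -/
inductive RTree (k : ℕ) : Type where
  | leaf : Bool → RTree k
  | node : Fin k → (Bool → ℝ) → RTree k → RTree k → RTree k

namespace RTree

/-- All transition probabilities lie in `[0,1]`. -/
def Valid {k : ℕ} : RTree k → Prop
  | .leaf _ => True
  | .node _ g t0 t1 => (∀ z, 0 ≤ g z ∧ g z ≤ 1) ∧ Valid t0 ∧ Valid t1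

/-- The probability, on input `x`, that the computation reaches the leaf at
position `p` (a root-to-leaf path, `false` = left, `true` = right). -/
def leafDist {k : ℕ} : RTree k → (Fin k → Bool) → List Bool → ℝ
  | .leaf _, _, p => if p = [] then 1 else 0
  | .node _ _ _ _, _, [] => 0
  | .node i g t0 _, x, false :: p => g (x i) * leafDist t0 x p
  | .node i g _ t1, x, true :: p => (1 - g (x i)) * leafDist t1 x p

/-- The probability that the output `T(x)` (the 0/1 label of the leaf reached)
is `1` on input `x`. -/
def outProb {k : ℕ} : RTree k → (Fin k → Bool) → ℝ
  | .leaf b, _ => if b then 1 else 0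
  | .node i g t0 t1, x => g (x i) * outProb t0 x + (1 - g (x i)) * outProb t1 x

/-- `IsMod i T T'` holds iff `T'` is obtained from `T` by keeping unchanged every
node labeled `i` and replacing, at each node labeled `j ≠ i`, the random transition
by an arbitrary fixed deterministic choice of child (a constant transition
function `1` or `0`). -/
def IsMod {k : ℕ} (i : Fin k) : RTree k → RTree k → Prop
  | .leaf b, .leaf b' => b' = b
  | .node j g t0 t1, .node j' g' t0' t1' =>
      j' = j ∧ IsMod i t0 t0' ∧ IsMod i t1 t1' ∧
        (if j = i then g' = g else g' = (fun _ => 1) ∨ g' = (fun _ => 0))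
  | _, _ => False

/-- The overlap `∑_ℓ min (D'_0 ℓ) (D'_1 ℓ)` of the two leaf distributions of a tree
whose only input dependence is on coordinate `i`, when `x i = 0` resp. `x i = 1`. -/
noncomputable def ovl {k : ℕ} (t : RTree k) : ℝ :=
  ∑' p : List Bool, min (t.leafDist (fun _ => false) p) (t.leafDist (fun _ => true) p)

/-- The uncertainty `β_i(T)` of `T` about coordinate `i`: the minimum, over all
trees `T'` obtained from `T` by fixing deterministic choices at all nodes labeled
`j ≠ i`, of the overlap between the leaf distributions of `T'` for `x i = 0` and
`x i = 1`. -/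
noncomputable def beta {k : ℕ} (t : RTree k) (i : Fin k) : ℝ :=
  sInf {v : ℝ | ∃ t', IsMod i t t' ∧ ovl t' = v}

end RTree

namespace RTree

/-- The subtree of `t` rooted at the node addressed by the path `π`
(`false` = left, `true` = right), if the path is valid. -/
def subtreeAt {k : ℕ} : RTree k → List Bool → Option (RTree k)
  | t, [] => some t
  | .leaf _, _ :: _ => none
  | .node _ _ t0 _, false :: p => subtreeAt t0 p
  | .node _ _ _ t1, true :: p => subtreeAt t1 p

/-- `pProd i z t π` is `p_{v,i}(z)`: the product, over all nodes labeled `i` on the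
root-to-`v` path `π` in `t`, of the probability of following the edge toward `v`
given `x i = z`. -/
def pProd {k : ℕ} (i : Fin k) (z : Bool) : RTree k → List Bool → ℝ
  | _, [] => 1
  | .leaf _, _ :: _ => 1
  | .node j g t0 _, false :: p => (if j = i then g z else 1) * pProd i z t0 p
  | .node j g _ t1, true :: p => (if j = i then 1 - g z else 1) * pProd i z t1 p

/-- The bottom-up computation of `β_{v,i}`, carried out relative to the accumulated
prefix products `a = p_{v,i}(0)` and `b = p_{v,i}(1)`: at a leaf the value is
`min a b`; at an internal node querying `j ≠ i` it is the minimum of the two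
children's values; at an internal node querying `i` it is the sum of the two
children's values (with the accumulators updated by the edge probabilities). -/
def betaAcc {k : ℕ} (i : Fin k) : RTree k → ℝ → ℝ → ℝ
  | .leaf _, a, b => min a b
  | .node j g t0 t1, a, b =>
      if j = i then
        betaAcc i t0 (a * g false) (b * g true) +
          betaAcc i t1 (a * (1 - g false)) (b * (1 - g true))
      else
        min (betaAcc i t0 a b) (betaAcc i t1 a b)

end RTree

/-! Weight the two leaf distributions by the probabilities `a`, `b` of reaching a node given
`x i = 0` and `x i = 1`, and consider the set of overlaps over all ways of fixing the choices below
it. At a node labeled `i`, the overlap splits as a sum over the two subtrees, whose choices are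
independent, so this set is the Minkowski sum of the children's sets. At any other node, the fixed
choice sends the full weight into one child and none into the other, so it is the union of the
children's sets. The least element of a Minkowski sum is the sum of the least elements, and that of
a union is their minimum: exactly the recursion defining `β_{v,i}`. The bound by the prefix products
comes from the superadditivity of `min`. -/

open scoped Pointwise

theorem hasSum_of_hasSum_cons {α M : Type*} [Fintype α] [AddCommMonoid M] [TopologicalSpace M]
    [ContinuousAdd M] {f : List α → M} {s : α → M}
    (hf : ∀ c, HasSum (fun p => f (c :: p)) (s c)) : HasSum f (f [] + ∑ c, s c) := by
  let branch (c : α) : Set (List α) := Set.range (List.cons c)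
  have disjoint_branch : Pairwise (Function.onFun Disjoint branch) := by
    intro c d hcd
    refine Set.disjoint_left.2 ?_
    rintro _ ⟨p, rfl⟩ ⟨q, hq⟩
    exact hcd (List.head_eq_of_cons_eq hq).symm
  have hasSum_branches : HasSum (fun p : ⋃ c ∈ Finset.univ, branch c => f p) (∑ c, s c) :=
    hasSum_sum_disjoint _ (disjoint_branch.set_pairwise _)
      fun c _ => List.cons_injective.hasSum_range_iff.2 (hf c)
  have compl_nil : {[]}ᶜ = ⋃ c ∈ Finset.univ, branch c := by
    ext p
    cases p <;> simp [branch]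
  exact (hasSum_unique fun p : ({[]} : Set (List α)) => f p).add_isCompl
    (compl_nil ▸ isCompl_compl) hasSum_branches

namespace RTree

variable {k : ℕ}

/-- The summand of the weighted overlap `weightedOvl`: the lesser of the probabilities of the leaf
at position `p` under `a · D_0` and `b · D_1`, where `D_z` is the leaf distribution when the queried
coordinate is `z`. As for `leafDist`, positions that are not leaves get the value `0`. -/
noncomputable def weightedMin (t : RTree k) (a b : ℝ) (p : List Bool) : ℝ :=
  min (a * t.leafDist (fun _ => false) p) (b * t.leafDist (fun _ => true) p)

theorem weightedMin_node_nil (j : Fin k) (g : Bool → ℝ) (t₀ t₁ : RTree k) (a b : ℝ) :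
    weightedMin (.node j g t₀ t₁) a b [] = 0 := by
  simp [weightedMin, leafDist]

theorem weightedMin_node_false_cons (j : Fin k) (g : Bool → ℝ) (t₀ t₁ : RTree k) (a b : ℝ)
    (p : List Bool) :
    weightedMin (.node j g t₀ t₁) a b (false :: p) =
      weightedMin t₀ (a * g false) (b * g true) p := by
  simp only [weightedMin, leafDist, mul_assoc]

theorem weightedMin_node_true_cons (j : Fin k) (g : Bool → ℝ) (t₀ t₁ : RTree k) (a b : ℝ)
    (p : List Bool) :
    weightedMin (.node j g t₀ t₁) a b (true :: p) =
      weightedMin t₁ (a * (1 - g false)) (b * (1 - g true)) p := by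
  simp only [weightedMin, leafDist, mul_assoc]

/-- The overlap `∑_ℓ min (a · D_0 ℓ) (b · D_1 ℓ)` of the leaf distributions weighted by `a` and `b`.
When `t` is the subtree at `v`, taking `a = p_{v,i}(0)` and `b = p_{v,i}(1)` measures the part of
the overlap lying below `v` when the fixed choices at the nodes above it lead toward `v`. -/
noncomputable def weightedOvl (t : RTree k) (a b : ℝ) : ℝ :=
  ∑' p : List Bool, weightedMin t a b p

theorem weightedOvl_one_one (t : RTree k) : weightedOvl t 1 1 = ovl t := by
  simp only [weightedOvl, weightedMin, ovl, one_mul]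

theorem weightedOvl_zero_zero (t : RTree k) : weightedOvl t 0 0 = 0 := by
  simp [weightedOvl, weightedMin]

theorem hasSum_weightedMin_leaf (c : Bool) (a b : ℝ) :
    HasSum (weightedMin (.leaf c : RTree k) a b) (min a b) := by
  convert hasSum_single [] ?_ using 1
  · simp [weightedMin, leafDist]
  · intro p hp
    simp [weightedMin, leafDist, hp]

theorem hasSum_weightedMin_node {t₀ t₁ : RTree k} {a b s₀ s₁ : ℝ} (j : Fin k) (g : Bool → ℝ)
    (h₀ : HasSum (weightedMin t₀ (a * g false) (b * g true)) s₀)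
    (h₁ : HasSum (weightedMin t₁ (a * (1 - g false)) (b * (1 - g true))) s₁) :
    HasSum (weightedMin (.node j g t₀ t₁) a b) (s₀ + s₁) := by
  convert hasSum_of_hasSum_cons (s := fun c => bif c then s₁ else s₀) ?_ using 1
  · simp [weightedMin_node_nil, add_comm]
  · rintro (_ | _)
    · simpa [weightedMin_node_false_cons] using h₀
    · simpa [weightedMin_node_true_cons] using h₁

theorem summable_weightedMin (t : RTree k) (a b : ℝ) : Summable (weightedMin t a b) := by
  induction t generalizing a b with
  | leaf c => exact (hasSum_weightedMin_leaf c a b).summable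
  | node j g t₀ t₁ ih₀ ih₁ =>
    exact (hasSum_weightedMin_node j g (ih₀ _ _).hasSum (ih₁ _ _).hasSum).summable

theorem weightedOvl_leaf (c : Bool) (a b : ℝ) : weightedOvl (.leaf c : RTree k) a b = min a b :=
  (hasSum_weightedMin_leaf c a b).tsum_eq

theorem weightedOvl_node (j : Fin k) (g : Bool → ℝ) (t₀ t₁ : RTree k) (a b : ℝ) :
    weightedOvl (.node j g t₀ t₁) a b =
      weightedOvl t₀ (a * g false) (b * g true) +
        weightedOvl t₁ (a * (1 - g false)) (b * (1 - g true)) :=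
  (hasSum_weightedMin_node j g (summable_weightedMin t₀ _ _).hasSum
    (summable_weightedMin t₁ _ _).hasSum).tsum_eq

theorem weightedOvl_node_one (j : Fin k) (t₀ t₁ : RTree k) (a b : ℝ) :
    weightedOvl (.node j (fun _ => 1) t₀ t₁) a b = weightedOvl t₀ a b := by
  simp [weightedOvl_node, weightedOvl_zero_zero]

theorem weightedOvl_node_zero (j : Fin k) (t₀ t₁ : RTree k) (a b : ℝ) :
    weightedOvl (.node j (fun _ => 0) t₀ t₁) a b = weightedOvl t₁ a b := by
  simp [weightedOvl_node, weightedOvl_zero_zero]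

section IsMod

variable {i j : Fin k} {g : Bool → ℝ} {t₀ t₁ t' : RTree k}

theorem isMod_leaf_iff {c : Bool} : IsMod i (.leaf c) t' ↔ t' = .leaf c := by
  cases t' <;> simp [IsMod]

theorem isMod_node_self_iff :
    IsMod i (.node i g t₀ t₁) t' ↔
      ∃ s₀ s₁, IsMod i t₀ s₀ ∧ IsMod i t₁ s₁ ∧ t' = .node i g s₀ s₁ := by
  cases t' <;> grind [IsMod]

theorem isMod_node_of_ne_iff (hj : j ≠ i) :
    IsMod i (.node j g t₀ t₁) t' ↔
      ∃ s₀ s₁, IsMod i t₀ s₀ ∧ IsMod i t₁ s₁ ∧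
        (t' = .node j (fun _ => 1) s₀ s₁ ∨ t' = .node j (fun _ => 0) s₀ s₁) := by
  cases t' <;> grind [IsMod]

theorem exists_isMod (i : Fin k) (t : RTree k) : ∃ t', IsMod i t t' := by
  induction t with
  | leaf c => exact ⟨.leaf c, isMod_leaf_iff.2 rfl⟩
  | node j g t₀ t₁ ih₀ ih₁ =>
    obtain ⟨s₀, h₀⟩ := ih₀
    obtain ⟨s₁, h₁⟩ := ih₁
    rcases eq_or_ne j i with rfl | hj
    · exact ⟨_, isMod_node_self_iff.2 ⟨s₀, s₁, h₀, h₁, rfl⟩⟩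
    · exact ⟨_, (isMod_node_of_ne_iff hj).2 ⟨s₀, s₁, h₀, h₁, .inl rfl⟩⟩

end IsMod

/-- The weighted overlaps of all trees obtained from `t` by fixing deterministic choices at the
nodes not labeled `i`. For weights `1`, `1` this is the set whose infimum is `β_i(t)`. -/
def modOvls (i : Fin k) (t : RTree k) (a b : ℝ) : Set ℝ :=
  {v | ∃ t', IsMod i t t' ∧ weightedOvl t' a b = v}

theorem sInf_modOvls_one_one (i : Fin k) (t : RTree k) : sInf (modOvls i t 1 1) = t.beta i := by
  simp only [modOvls, weightedOvl_one_one, beta]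

theorem modOvls_leaf (i : Fin k) (c : Bool) (a b : ℝ) : modOvls i (.leaf c) a b = {min a b} := by
  simp [modOvls, isMod_leaf_iff, weightedOvl_leaf, eq_comm]

theorem modOvls_node_self (i : Fin k) (g : Bool → ℝ) (t₀ t₁ : RTree k) (a b : ℝ) :
    modOvls i (.node i g t₀ t₁) a b =
      modOvls i t₀ (a * g false) (b * g true) +
        modOvls i t₁ (a * (1 - g false)) (b * (1 - g true)) := by
  ext v
  simp only [modOvls, isMod_node_self_iff, Set.mem_add, Set.mem_ofPred_eq]
  constructor
  · rintro ⟨_, ⟨s₀, s₁, h₀, h₁, rfl⟩, rfl⟩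
    exact ⟨_, ⟨s₀, h₀, rfl⟩, _, ⟨s₁, h₁, rfl⟩, (weightedOvl_node ..).symm⟩
  · rintro ⟨_, ⟨s₀, h₀, rfl⟩, _, ⟨s₁, h₁, rfl⟩, rfl⟩
    exact ⟨_, ⟨s₀, s₁, h₀, h₁, rfl⟩, weightedOvl_node ..⟩

theorem modOvls_node_of_ne {i j : Fin k} (hj : j ≠ i) (g : Bool → ℝ) (t₀ t₁ : RTree k)
    (a b : ℝ) : modOvls i (.node j g t₀ t₁) a b = modOvls i t₀ a b ∪ modOvls i t₁ a b := by
  ext v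
  simp only [modOvls, isMod_node_of_ne_iff hj, Set.mem_union, Set.mem_ofPred_eq]
  constructor
  · rintro ⟨_, ⟨s₀, s₁, h₀, h₁, rfl | rfl⟩, rfl⟩
    · exact .inl ⟨s₀, h₀, (weightedOvl_node_one ..).symm⟩
    · exact .inr ⟨s₁, h₁, (weightedOvl_node_zero ..).symm⟩
  · rintro (⟨s₀, h₀, rfl⟩ | ⟨s₁, h₁, rfl⟩)
    · obtain ⟨s₁, h₁⟩ := exists_isMod i t₁
      exact ⟨_, ⟨s₀, s₁, h₀, h₁, .inl rfl⟩, weightedOvl_node_one ..⟩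
    · obtain ⟨s₀, h₀⟩ := exists_isMod i t₀
      exact ⟨_, ⟨s₀, s₁, h₀, h₁, .inr rfl⟩, weightedOvl_node_zero ..⟩

theorem betaAcc_node_self (i : Fin k) (g : Bool → ℝ) (t₀ t₁ : RTree k) (a b : ℝ) :
    betaAcc i (.node i g t₀ t₁) a b =
      betaAcc i t₀ (a * g false) (b * g true) +
        betaAcc i t₁ (a * (1 - g false)) (b * (1 - g true)) :=
  if_pos rfl

theorem betaAcc_node_of_ne {i j : Fin k} (hj : j ≠ i) (g : Bool → ℝ) (t₀ t₁ : RTree k)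
    (a b : ℝ) : betaAcc i (.node j g t₀ t₁) a b = min (betaAcc i t₀ a b) (betaAcc i t₁ a b) :=
  if_neg hj

theorem isLeast_modOvls_betaAcc (i : Fin k) (t : RTree k) (a b : ℝ) :
    IsLeast (modOvls i t a b) (betaAcc i t a b) := by
  induction t generalizing a b with
  | leaf c =>
    rw [modOvls_leaf]
    exact isLeast_singleton
  | node j g t₀ t₁ ih₀ ih₁ =>
    rcases eq_or_ne j i with rfl | hj
    · rw [modOvls_node_self, betaAcc_node_self]
      exact (ih₀ _ _).image2 (fun _ => add_left_mono) (fun _ => add_right_mono) (ih₁ _ _)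
    · rw [modOvls_node_of_ne hj, betaAcc_node_of_ne hj]
      exact (ih₀ a b).union (ih₁ a b)

theorem betaAcc_one_one_eq_beta (i : Fin k) (t : RTree k) : betaAcc i t 1 1 = t.beta i := by
  rw [← sInf_modOvls_one_one, (isLeast_modOvls_betaAcc i t 1 1).csInf_eq]

theorem betaAcc_le_min (i : Fin k) (t : RTree k) (a b : ℝ) : betaAcc i t a b ≤ min a b := by
  induction t generalizing a b with
  | leaf c => exact le_rfl
  | node j g t₀ t₁ ih₀ ih₁ =>
    rcases eq_or_ne j i with rfl | hj
    · calc
        betaAcc j (.node j g t₀ t₁) a b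
          = betaAcc j t₀ (a * g false) (b * g true) +
              betaAcc j t₁ (a * (1 - g false)) (b * (1 - g true)) := betaAcc_node_self ..
        _ ≤ min (a * g false) (b * g true) + min (a * (1 - g false)) (b * (1 - g true)) :=
          add_le_add (ih₀ _ _) (ih₁ _ _)
        _ ≤ min (a * g false + a * (1 - g false)) (b * g true + b * (1 - g true)) :=
          min_add_min_le_min_add_add
        _ = min a b := by ring_nf
    · rw [betaAcc_node_of_ne hj]
      exact (min_le_left _ _).trans (ih₀ a b)

end RTree

open RTree in
theorem betaAcc_root_eq_beta_and_le_pProd_general {k : ℕ} (T : RTree k) (i : Fin k) :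
    betaAcc i T 1 1 = T.beta i ∧
    ∀ (π : List Bool) (t : RTree k), subtreeAt T π = some t →
      betaAcc i t (pProd i false T π) (pProd i true T π) ≤
        min (pProd i false T π) (pProd i true T π) :=
  ⟨betaAcc_one_one_eq_beta i T, fun _ t _ => betaAcc_le_min i t _ _⟩

open RTree in
/-- For every coordinate `i`: (1) the bottom-up value at the root equals the
uncertainty `β_i(T)`, and (2) for every node `v` of `T` (addressed by a path `π`),
`β_{v,i} ≤ min (p_{v,i}(0)) (p_{v,i}(1))`. -/
theorem betaAcc_root_eq_beta_and_le_pProd {k : ℕ} (T : RTree k) (hT : T.Valid)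
    (i : Fin k) :
    betaAcc i T 1 1 = T.beta i ∧
    ∀ (π : List Bool) (t : RTree k), subtreeAt T π = some t →
      betaAcc i t (pProd i false T π) (pProd i true T π) ≤
        min (pProd i false T π) (pProd i true T π) :=
  betaAcc_root_eq_beta_and_le_pProd_general T i
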